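/- Proposition 4 (FDMA, unbounded peak power). Consider Problem (P2) in energy variables without the peak power constraints. Let (α₀, α₁, x, s₀, {s_{k,n}}, {m_{k,n}}) be any feasible point with α₁ > 0, and let α₁' satisfy α₁ < α₁' < 1. Then the point obtained by replacing α₁ with α₁' and α₀ with 1 − α₁' > 0, keeping x, s₀, {s_{k,n}}, {m_{k,n}} unchanged, is also feasible, and its sum-rate is greater than or equal to the sum-rate of the original point. Consequently, the supremum of the sum-rate is approached as α₁ → 1 and α₀ → 0. -/

import Mathlib

open Finset

/-- Rate of pair `k` on a subcarrier in Problem (P2) (FDMA, energy variables), over `N`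
subcarriers: WIT time fraction `a₁`, source energy `mkn` (first-hop gain `h1kn`),
relay energy `skn` (second-hop gain `h2kn`), noise power `σ²`; the rate is `0` when
`a₁ = 0`. -/
noncomputable def fdmaRate (N : ℕ) (σ a₁ mkn h1kn skn h2kn : ℝ) : ℝ :=
  if a₁ = 0 then 0
  else (a₁ / (2 * N)) * min (Real.logb 2 (1 + 2 * mkn * h1kn / (a₁ * σ ^ 2)))
                            (Real.logb 2 (1 + 2 * skn * h2kn / (a₁ * σ ^ 2)))

theorem aux_log (a b c : ℝ) (ha : 0 < a) (hab : a < b) (hc : 0 ≤ c) :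
    a * Real.logb 2 (1 + c / a) ≤ b * Real.logb 2 (1 + c / b) := by
  have hb : 0 < b := ha.trans hab
  have hcb : 0 ≤ c / b := by positivity
  have hca : 0 ≤ c / a := by positivity
  have h := one_add_mul_self_le_rpow_one_add (s := c / b) (by linarith) (p := b / a)
    ((one_le_div ha).2 hab.le)
  have e : b / a * (c / b) = c / a := by field_simp
  rw [e] at h
  have h3 := Real.logb_le_logb_of_le (b := 2) (by norm_num) (by linarith) h
  rw [Real.logb_rpow_eq_mul_logb_of_pos (by linarith)] at h3
  calc a * Real.logb 2 (1 + c / a) ≤ a * (b / a * Real.logb 2 (1 + c / b)) :=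
        mul_le_mul_of_nonneg_left h3 ha.le
    _ = b * Real.logb 2 (1 + c / b) := by field_simp

theorem aux_rate (N : ℕ) (σ a b m h s g : ℝ) (hσ : 0 < σ) (ha : 0 < a) (hab : a < b)
    (hm : 0 ≤ m) (hh : 0 ≤ h) (hs : 0 ≤ s) (hg : 0 ≤ g) :
    fdmaRate N σ a m h s g ≤ fdmaRate N σ b m h s g := by
  have hb : 0 < b := ha.trans hab
  have key : ∀ a : ℝ, 0 < a → fdmaRate N σ a m h s g = 1 / (2 * N) *
      min (a * Real.logb 2 (1 + (2 * m * h / σ ^ 2) / a))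
        (a * Real.logb 2 (1 + (2 * s * g / σ ^ 2) / a)) := by
    intro a ha
    rw [← mul_min_of_nonneg _ _ ha.le, fdmaRate, if_neg ha.ne', div_div, div_div,
      mul_comm (σ ^ 2) a]
    ring
  rw [key a ha, key b hb]
  exact mul_le_mul_of_nonneg_left (min_le_min (aux_log _ _ _ ha hab (by positivity))
    (aux_log _ _ _ ha hab (by positivity))) (by positivity)

/-- Proposition 4 (FDMA, unbounded peak power).  For any feasible point of Problem (P2)
without peak power constraints with `α₁ > 0`, and any `α₁ < α₁' < 1`, replacing `α₁` by
`α₁'` and `α₀` by `1 − α₁' > 0` (keeping all other variables) gives a feasible point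
whose sum-rate is at least the original sum-rate. -/
theorem stmt_12
    (K N : ℕ) (hK : 1 ≤ K) (hN : 1 ≤ N)
    (σ η P : ℝ) (hσ : 0 < σ) (hη0 : 0 < η) (hη1 : η < 1) (hP : 0 < P)
    (gr : Fin K → ℝ) (hgr : ∀ k, 0 < gr k)
    (h1 h2 : Fin K → Fin N → ℝ) (hh1 : ∀ k n, 0 < h1 k n) (hh2 : ∀ k n, 0 < h2 k n)
    (Ec : Fin K → ℝ) (hEc : ∀ k, 0 ≤ Ec k)
    -- a feasible point of Problem (P2) (no peak power constraints)
    (α₀ α₁ : ℝ) (x : Fin K → Fin N → ℝ) (s₀ : ℝ) (s m : Fin K → Fin N → ℝ)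
    (hα₀nn : 0 ≤ α₀) (hα₁pos : 0 < α₁) (htime : α₀ + α₁ ≤ 1)
    (hx01 : ∀ k n, x k n = 0 ∨ x k n = 1) (hxsum : ∀ n, ∑ k, x k n ≤ 1)
    (hs₀ : 0 ≤ s₀) (hs : ∀ k n, 0 ≤ s k n)
    (henergy : s₀ + ∑ k, ∑ n, s k n ≤ P)
    (hm : ∀ k n, 0 ≤ m k n)
    (hcaus : ∀ k, (∑ n, m k n) + Ec k ≤ η * s₀ * gr k)
    -- a longer WIT time
    (α₁' : ℝ) (hα₁'gt : α₁ < α₁') (hα₁'lt : α₁' < 1) :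
    -- the new point with `α₀` replaced by `1 − α₁'` and `α₁` by `α₁'` is feasible
    0 < 1 - α₁' ∧ (1 - α₁') + α₁' ≤ 1 ∧
    -- the sum-rate does not decrease
    (∑ k, ∑ n, x k n * fdmaRate N σ α₁ (m k n) (h1 k n) (s k n) (h2 k n)) ≤
      ∑ k, ∑ n, x k n * fdmaRate N σ α₁' (m k n) (h1 k n) (s k n) (h2 k n) := by
  refine ⟨by linarith, by linarith, ?_⟩
  refine Finset.sum_le_sum fun k _ => Finset.sum_le_sum fun n _ => ?_
  refine mul_le_mul_of_nonneg_left (aux_rate N σ _ _ _ _ _ _ hσ hα₁pos hα₁'gt (hm k n)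
    (hh1 k n).le (hs k n) (hh2 k n).le) ?_
  rcases hx01 k n with h | h <;> rw [h] <;> norm_num
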